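/- arXiv:2312.17126 — 6 statements merged into one kernel-verified Lean document; each statement's English description precedes it below -/
import Mathlib

section
/- Let d = 2k+2 with k odd, and let Γ^0, …, Γ^{2k+1} be complex n × n matrices satisfying the Lorentz Clifford relations and the chiral reality pattern. Then M := Γ^2 Γ^4 ⋯ Γ^{2k} is invertible, M conj(Γ^μ) M^{−1} = −Γ^μ for every μ = 0, 1, …, 2k+1, and M · conj(M) = (−1)^{k(k−1)/2} I. (This M is the charge-conjugation matrix M_C, and M·conj(M) computes C^2 on a Dirac fermion.) -/
/-!
Moving a matrix past `M = Γ^2 Γ^4 ⋯ Γ^{2k}` costs one sign for each factor it anticommutes with.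
If `μ` is `0` or odd, all `k` factors anticommute with `Γ^μ`, which is real, so the sign is
`(-1)^k`. If `μ ≥ 2` is even, one factor is `Γ^μ` itself, so the sign is `(-1)^(k-1)`, and
`conj(Γ^μ) = -Γ^μ` supplies the missing minus sign.

Since each factor is imaginary, `conj(M) = (-1)^k M`. Since each factor squares to `-1`, reordering
`M * M` gives `(-1)^(k(k-1)/2) (-1)^k`, and the two signs `(-1)^k` cancel in `M * conj(M)`.
-/

open Matrix

/-- Complex square matrices `Γ^0, …, Γ^{d-1}` satisfy the Lorentz Clifford relations if
`Γ^μ Γ^ν + Γ^ν Γ^μ = 2 η^{μν} I` where `η = diag(+1, -1, …, -1)`. -/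
def LorentzClifford {α : Type*} [Fintype α] [DecidableEq α] (d : ℕ)
    (Γ : ℕ → Matrix α α ℂ) : Prop :=
  ∀ μ < d, ∀ ν < d, Γ μ * Γ ν + Γ ν * Γ μ =
    if μ = ν then (if μ = 0 then (2 : ℂ) else (-2 : ℂ)) • 1 else 0

/-- The chiral reality pattern: `Γ^0` is real, `Γ^j` is real for odd `j`, and `Γ^j` is
imaginary for even `j ≥ 2` (here `conj` is the entrywise complex conjugate). -/
def ChiralReality {α : Type*} [Fintype α] [DecidableEq α] (d : ℕ)
    (Γ : ℕ → Matrix α α ℂ) : Prop :=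
  (Γ 0).map (starRingEnd ℂ) = Γ 0 ∧
  (∀ j, 1 ≤ j → j < d → j % 2 = 1 → (Γ j).map (starRingEnd ℂ) = Γ j) ∧
  (∀ j, 1 ≤ j → j < d → j % 2 = 0 → (Γ j).map (starRingEnd ℂ) = -(Γ j))

/-- Elements `a` and `b` anticommute: `a * b = -b * a`. Phrasing this through `SemiconjBy` lets
signs accumulate along products by composition of semiconjugations. -/
def Anticommute {R : Type*} [Mul R] [Neg R] (a b : R) : Prop :=
  SemiconjBy a b (-b)

namespace Anticommute

variable {R : Type*}

lemma symm [Mul R] [HasDistribNeg R] {a b : R} (h : Anticommute a b) : Anticommute b a := by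
  rw [Anticommute, SemiconjBy, neg_mul] at h ⊢
  rw [h, neg_neg]

variable [Monoid R] [HasDistribNeg R] {x : R} {l : List R}

lemma semiconjBy_list_prod (h : ∀ a ∈ l, Anticommute a x) :
    SemiconjBy l.prod x ((-1) ^ l.length * x) := by
  induction l with
  | nil => simp
  | cons a l ih =>
    rw [List.forall_mem_cons] at h
    have ha : SemiconjBy a ((-1) ^ l.length * x) ((-1) ^ l.length * -x) :=
      SemiconjBy.mul_right ((Commute.neg_one_right a).pow_right l.length) h.1
    simpa only [List.prod_cons, List.length_cons, pow_succ, mul_neg, mul_one, neg_mul] using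
      ha.mul_left (ih h.2)

lemma semiconjBy_list_prod_of_mem (hl : l.Pairwise Anticommute) (hx : x ∈ l) :
    SemiconjBy l.prod x (-((-1) ^ l.length * x)) := by
  induction l with
  | nil => simp at hx
  | cons a l ih =>
    rw [List.pairwise_cons] at hl
    have hsign : SemiconjBy a ((-1) ^ l.length) ((-1) ^ l.length) :=
      (Commute.neg_one_right a).pow_right l.length
    rcases List.mem_cons.mp hx with rfl | hxl
    · have hprod : SemiconjBy l.prod x ((-1) ^ l.length * x) :=
        semiconjBy_list_prod fun b hb => (hl.1 b hb).symm
      simpa only [List.prod_cons, List.length_cons, pow_succ, mul_neg, mul_one, neg_mul, neg_neg]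
        using (hsign.mul_right (Commute.refl x)).mul_left hprod
    · simpa only [List.prod_cons, List.length_cons, pow_succ, mul_neg, mul_one, neg_mul] using
        (hsign.mul_right (hl.1 x hxl)).neg_right.mul_left (ih hl.2 hxl)

lemma list_prod_mul_self {c : R} (hl : l.Pairwise Anticommute) (hsq : ∀ a ∈ l, a * a = c) :
    l.prod * l.prod = (-1) ^ l.length.choose 2 * c ^ l.length := by
  induction l with
  | nil => simp
  | cons a l ih =>
    rw [List.pairwise_cons] at hl
    rw [List.forall_mem_cons] at hsq
    have hprod : l.prod * a = (-1) ^ l.length * a * l.prod :=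
      semiconjBy_list_prod fun b hb => (hl.1 b hb).symm
    have hsign (m : ℕ) (y : R) : y * (-1) ^ m = (-1) ^ m * y :=
      (Commute.neg_one_right y).pow_right m
    calc (a :: l).prod * (a :: l).prod
        = a * (l.prod * a) * l.prod := by simp only [List.prod_cons, mul_assoc]
      _ = (-1) ^ l.length * ((a * a) * (l.prod * l.prod)) := by
        rw [hprod, ← mul_assoc, ← mul_assoc, hsign]
        simp only [mul_assoc]
      _ = (-1) ^ l.length * (c * ((-1) ^ l.length.choose 2 * c ^ l.length)) := by
        rw [hsq.1, ih hl.2 hsq.2]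
      _ = (-1) ^ (l.length + l.length.choose 2) * c ^ (l.length + 1) := by
        rw [← mul_assoc c, hsign, pow_add, pow_succ' c]
        simp only [mul_assoc]
      _ = (-1) ^ (a :: l).length.choose 2 * c ^ (a :: l).length := by
        rw [List.length_cons, Nat.choose_succ_succ', Nat.choose_one_right]

end Anticommute

/-- The list `Γ^2, Γ^4, …, Γ^{2k}`, whose product is the charge-conjugation matrix. -/
def evenGammas {R : Type*} (Γ : ℕ → R) (k : ℕ) : List R :=
  List.ofFn fun a : Fin k => Γ (2 * ((a : ℕ) + 1))

section EvenGammas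

variable {R : Type*} {Γ : ℕ → R} {k : ℕ}

lemma length_evenGammas : (evenGammas Γ k).length = k :=
  List.length_ofFn

lemma mem_evenGammas {x : R} :
    x ∈ evenGammas Γ k ↔ ∃ μ, Even μ ∧ μ ≠ 0 ∧ μ ≤ 2 * k ∧ Γ μ = x := by
  rw [evenGammas, List.mem_ofFn]
  constructor
  · rintro ⟨a, rfl⟩
    exact ⟨2 * (a + 1), even_two_mul _, by omega, by omega, rfl⟩
  · rintro ⟨μ, ⟨j, rfl⟩, hμ₀, hμk, rfl⟩
    exact ⟨⟨j - 1, by omega⟩, congrArg Γ (by grind)⟩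

end EvenGammas

section Gamma

variable {α : Type*} [Fintype α] [DecidableEq α] {Γ : ℕ → Matrix α α ℂ} {d k μ ν : ℕ}

lemma LorentzClifford.anticommute (hΓ : LorentzClifford d Γ) (hμ : μ < d) (hν : ν < d)
    (hne : μ ≠ ν) : Anticommute (Γ μ) (Γ ν) := by
  have h := hΓ μ hμ ν hν
  rw [if_neg hne] at h
  rw [Anticommute, SemiconjBy, neg_mul]
  exact eq_neg_of_add_eq_zero_left h

lemma LorentzClifford.mul_self (hΓ : LorentzClifford d Γ) (hμ : μ < d) (hμ₀ : μ ≠ 0) :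
    Γ μ * Γ μ = -1 := by
  have h := hΓ μ hμ μ hμ
  rw [if_pos rfl, if_neg hμ₀, ← two_smul ℂ, neg_smul, ← smul_neg] at h
  exact smul_right_injective _ (two_ne_zero : (2 : ℂ) ≠ 0) h

lemma LorentzClifford.pairwise_evenGammas (hΓ : LorentzClifford d Γ) (hd : 2 * k < d) :
    (evenGammas Γ k).Pairwise Anticommute :=
  List.pairwise_ofFn.mpr fun _ _ hij => hΓ.anticommute (by omega) (by omega) (by omega)

lemma LorentzClifford.evenGammas_prod_mul_self (hΓ : LorentzClifford d Γ) (hd : 2 * k < d) :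
    (evenGammas Γ k).prod * (evenGammas Γ k).prod = (-1) ^ k.choose 2 * (-1) ^ k := by
  have hsq : ∀ A ∈ evenGammas Γ k, A * A = -1 := by
    intro A hA
    obtain ⟨μ, -, hμ₀, hμk, rfl⟩ := mem_evenGammas.mp hA
    exact hΓ.mul_self (by omega) hμ₀
  simpa only [length_evenGammas] using
    Anticommute.list_prod_mul_self (hΓ.pairwise_evenGammas hd) hsq

lemma LorentzClifford.isUnit_evenGammas_prod (hΓ : LorentzClifford d Γ) (hd : 2 * k < d) :
    IsUnit (evenGammas Γ k).prod := by
  have hsq : IsUnit ((evenGammas Γ k).prod * (evenGammas Γ k).prod) := by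
    rw [hΓ.evenGammas_prod_mul_self hd]
    exact (isUnit_one.neg.pow _).mul (isUnit_one.neg.pow _)
  exact ((Commute.refl _).isUnit_mul_iff.mp hsq).1

lemma ChiralReality.map_conj_of_even (hreal : ChiralReality d Γ) (hμ : μ < d) (hμ₀ : μ ≠ 0)
    (heven : Even μ) : (Γ μ).map (starRingEnd ℂ) = -Γ μ :=
  hreal.2.2 μ (Nat.one_le_iff_ne_zero.mpr hμ₀) hμ (Nat.even_iff.mp heven)

lemma ChiralReality.map_conj_of_odd (hreal : ChiralReality d Γ) (hμ : μ < d) (hodd : Odd μ) :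
    (Γ μ).map (starRingEnd ℂ) = Γ μ :=
  hreal.2.1 μ hodd.pos hμ (Nat.odd_iff.mp hodd)

lemma ChiralReality.map_conj_evenGammas_prod (hreal : ChiralReality d Γ) (hd : 2 * k < d) :
    (evenGammas Γ k).prod.map (starRingEnd ℂ) = (-1) ^ k * (evenGammas Γ k).prod := by
  have hneg : ∀ A ∈ evenGammas Γ k, (starRingEnd ℂ).mapMatrix A = -A := by
    intro A hA
    obtain ⟨μ, heven, hμ₀, hμk, rfl⟩ := mem_evenGammas.mp hA
    exact hreal.map_conj_of_even (by omega) hμ₀ heven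
  rw [← RingHom.mapMatrix_apply, map_list_prod, List.map_congr_left hneg, List.prod_map_neg,
    length_evenGammas]

lemma LorentzClifford.evenGammas_prod_mul_map_conj (hΓ : LorentzClifford d Γ)
    (hreal : ChiralReality d Γ) (hd : 2 * k < d) :
    (evenGammas Γ k).prod * (evenGammas Γ k).prod.map (starRingEnd ℂ) = (-1) ^ k.choose 2 := by
  set M := (evenGammas Γ k).prod
  calc M * M.map (starRingEnd ℂ)
      = (-1) ^ k * (M * M) := by
        rw [hreal.map_conj_evenGammas_prod hd, ← mul_assoc,
          ((Commute.neg_one_right M).pow_right k).eq, mul_assoc]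
    _ = (-1) ^ k * ((-1) ^ k.choose 2 * (-1) ^ k) := by rw [hΓ.evenGammas_prod_mul_self hd]
    _ = (-1) ^ (k + k) * (-1) ^ k.choose 2 := by
        rw [pow_mul_comm (-1) (k.choose 2), ← mul_assoc, pow_add]
    _ = (-1) ^ k.choose 2 := by rw [(Even.add_self k).neg_one_pow, one_mul]

lemma LorentzClifford.semiconjBy_evenGammas_prod_map_conj (hΓ : LorentzClifford d Γ)
    (hreal : ChiralReality d Γ) (hd : 2 * k < d) (hμ : μ < d) (hμk : Even μ → μ ≤ 2 * k) :
    SemiconjBy (evenGammas Γ k).prod ((Γ μ).map (starRingEnd ℂ)) ((-1) ^ k * Γ μ) := by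
  by_cases hmem : Even μ ∧ μ ≠ 0
  · obtain ⟨heven, hμ₀⟩ := hmem
    have hmove : SemiconjBy (evenGammas Γ k).prod (-Γ μ) ((-1) ^ k * Γ μ) := by
      simpa only [neg_neg, length_evenGammas] using
        (Anticommute.semiconjBy_list_prod_of_mem (hΓ.pairwise_evenGammas hd)
          (mem_evenGammas.mpr ⟨μ, heven, hμ₀, hμk heven, rfl⟩)).neg_right
    rwa [hreal.map_conj_of_even hμ hμ₀ heven]
  · have hanti : ∀ A ∈ evenGammas Γ k, Anticommute A (Γ μ) := by
      intro A hA
      obtain ⟨ν, heven, hν₀, hνk, rfl⟩ := mem_evenGammas.mp hA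
      exact hΓ.anticommute (by omega) hμ fun h => hmem (h ▸ ⟨heven, hν₀⟩)
    have hconj : (Γ μ).map (starRingEnd ℂ) = Γ μ := by
      rcases eq_or_ne μ 0 with rfl | hμ₀
      · exact hreal.1
      · exact hreal.map_conj_of_odd hμ (Nat.not_even_iff_odd.mp fun heven => hmem ⟨heven, hμ₀⟩)
    simpa only [length_evenGammas, hconj] using Anticommute.semiconjBy_list_prod hanti

/-- An even `μ > 2k` is excluded because `Γ^μ` is imaginary but not a factor of `M`, so it would
pick up the opposite sign. -/
theorem charge_conjugation_matrix_k_odd_general (hΓ : LorentzClifford d Γ)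
    (hreal : ChiralReality d Γ) (hd : 2 * k < d) {M : Matrix α α ℂ}
    (hM : M = (evenGammas Γ k).prod) :
    IsUnit M ∧
    (∀ μ < d, (Even μ → μ ≤ 2 * k) →
      M * (Γ μ).map (starRingEnd ℂ) * M⁻¹ = (-1) ^ k * Γ μ) ∧
    M * M.map (starRingEnd ℂ) = ((-1 : ℂ) ^ (k * (k - 1) / 2)) • 1 := by
  subst hM
  have hunit := hΓ.isUnit_evenGammas_prod hd
  refine ⟨hunit, fun μ hμ hμk => ?_, ?_⟩
  · rw [(hΓ.semiconjBy_evenGammas_prod_map_conj hreal hd hμ hμk).eq]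
    exact mul_nonsing_inv_cancel_right _ _ ((isUnit_iff_isUnit_det _).mp hunit)
  · rw [hΓ.evenGammas_prod_mul_map_conj hreal hd, Nat.choose_two_right,
      ← Algebra.algebraMap_eq_smul_one, map_pow, map_neg, map_one]

end Gamma

/-- For `d = 2k+2` with `k` odd, the charge-conjugation matrix `M_C = Γ^2 Γ^4 ⋯ Γ^{2k}`
is invertible, satisfies `M_C conj(Γ^μ) M_C⁻¹ = -Γ^μ` for all `μ`, and
`M_C · conj(M_C) = (-1)^{k(k-1)/2} I` (computing `C²` on a Dirac fermion). -/
theorem charge_conjugation_matrix_k_odd {n k : ℕ} (hk : Odd k)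
    (Γ : ℕ → Matrix (Fin n) (Fin n) ℂ)
    (hΓ : LorentzClifford (2 * k + 2) Γ)
    (hreal : ChiralReality (2 * k + 2) Γ)
    (M : Matrix (Fin n) (Fin n) ℂ)
    (hM : M = (List.ofFn (fun a : Fin k => Γ (2 * ((a : ℕ) + 1)))).prod) :
    IsUnit M ∧
    (∀ μ < 2 * k + 2, M * (Γ μ).map (starRingEnd ℂ) * M⁻¹ = -(Γ μ)) ∧
    M * M.map (starRingEnd ℂ) = ((-1 : ℂ) ^ (k * (k - 1) / 2)) • 1 := by
  obtain ⟨hunit, hconj, hsq⟩ := charge_conjugation_matrix_k_odd_general hΓ hreal (by omega) hM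
  exact ⟨hunit, fun μ hμ => by simpa [hk.neg_one_pow] using hconj μ hμ (by grind), hsq⟩
end

section
/- Let d = 2k+2 with k even, and let Γ^0, …, Γ^{2k+1} be complex n × n matrices satisfying the Lorentz Clifford relations and the chiral reality pattern. Then M := Γ^0 Γ^2 Γ^4 ⋯ Γ^{2k} (the product of all even-index Gamma matrices) is invertible, satisfies M conj(Γ^0) M^{−1} = Γ^0 and M conj(Γ^j) M^{−1} = −Γ^j for j = 1, …, 2k+1, and conj(M) · M = (−1)^{k(k+1)/2} I. (This M is the time-reversal matrix M_T, and conj(M)·M computes T^2 on a Dirac fermion.) -/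
/-!
Moving `Γ^j` through the `k + 1` factors of `M` costs the sign `-1` for each factor other than `Γ^j`
itself, hence `(-1)^k` if `j` is even and `(-1)^(k+1)` if `j` is odd. For `j ≠ 0` the reality
pattern turns both signs into `(-1)^(k+1)`.

For even `j` the signs in `(Γ^j)² = ±1` and `conj(Γ^j) = ±Γ^j` agree, so `conj(Γ^j)` is the inverse
of `Γ^j`. Pairing each factor of `conj(M)` with the matching factor of `M` therefore leaves one sign
for each of the `(k+1).choose 2` pairs of distinct factors.
-/

open Matrix

section ScalarCommutation

variable {S R : Type*} [CommMonoid S] [Monoid R] [MulAction S R] [IsScalarTower S R R]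
  [SMulCommClass S R R] {m : ℕ}

lemma semiconjBy_prod_ofFn_smul {f : Fin m → R} {x : R} {c : Fin m → S}
    (h : ∀ a, SemiconjBy (f a) x (c a • x)) :
    SemiconjBy (List.ofFn f).prod x ((∏ a, c a) • x) := by
  induction m with
  | zero => simp
  | succ m ih =>
    have htail := (ih fun a => h a.succ).eq
    rw [List.ofFn_succ, List.prod_cons, Fin.prod_univ_succ, SemiconjBy, mul_assoc, htail,
      smul_mul_assoc, mul_smul_comm, ← mul_assoc, (h 0).eq, smul_mul_assoc, smul_mul_assoc,
      smul_smul, smul_mul_assoc, mul_assoc, mul_comm (c 0)]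

lemma prod_ofFn_mul_prod_ofFn_of_mul_eq_one {f g : Fin m → R} {c : S}
    (hcomm : ∀ a b, a < b → SemiconjBy (f b) (g a) (c • g a)) (hinv : ∀ a, f a * g a = 1) :
    (List.ofFn f).prod * (List.ofFn g).prod = c ^ m.choose 2 • (1 : R) := by
  induction m with
  | zero => simp
  | succ m ih =>
    have htail := ih (fun a b hab => hcomm a.succ b.succ (Fin.succ_lt_succ_iff.mpr hab))
      fun a => hinv a.succ
    have hhead := (semiconjBy_prod_ofFn_smul fun b : Fin m => hcomm 0 b.succ b.succ_pos).eq
    rw [Fin.prod_const] at hhead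
    rw [List.ofFn_succ, List.ofFn_succ, List.prod_cons, List.prod_cons]
    generalize (List.ofFn fun b => f b.succ).prod = F at htail hhead ⊢
    generalize (List.ofFn fun b => g b.succ).prod = G at htail ⊢
    calc f 0 * F * (g 0 * G) = f 0 * (F * g 0) * G := by simp only [mul_assoc]
      _ = c ^ m • (f 0 * g 0 * (F * G)) := by
        rw [hhead, smul_mul_assoc, mul_smul_comm, smul_mul_assoc]
        simp only [mul_assoc]
      _ = c ^ (m + 1).choose 2 • 1 := by
        rw [hinv, one_mul, htail, smul_smul, ← pow_add, Nat.choose_succ_succ' m 1,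
          Nat.choose_one_right]

end ScalarCommutation

section GammaMatrices

variable {α : Type*} [Fintype α] [DecidableEq α] {d k i j : ℕ} {Γ : ℕ → Matrix α α ℂ}

lemma mul_mul_inv_eq_of_semiconjBy {K : Type*} [CommRing K] {M A B : Matrix α α K}
    (hM : IsUnit M) (h : SemiconjBy M A B) : M * A * M⁻¹ = B := by
  rw [h.eq, mul_nonsing_inv_cancel_right _ _ ((isUnit_iff_isUnit_det M).mp hM)]

namespace LorentzClifford

lemma semiconjBy_neg (hΓ : LorentzClifford d Γ) (hi : i < d) (hj : j < d) (hij : i ≠ j) :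
    SemiconjBy (Γ i) (Γ j) (-Γ j) := by
  have h := hΓ i hi j hj
  rw [if_neg hij] at h
  rw [SemiconjBy, neg_mul, eq_neg_of_add_eq_zero_left h]

lemma mul_self_s10 (hΓ : LorentzClifford d Γ) (hi : i < d) :
    Γ i * Γ i = (if i = 0 then (1 : ℂ) else -1) • 1 := by
  have h := hΓ i hi i hi
  rw [if_pos rfl, ← two_smul ℂ] at h
  apply smul_right_injective _ (two_ne_zero (α := ℂ))
  simp only [h, smul_smul]
  split_ifs <;> norm_num

end LorentzClifford

namespace ChiralReality

lemma map_of_odd (hreal : ChiralReality d Γ) (hj : j < d) (hodd : Odd j) :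
    (Γ j).map (starRingEnd ℂ) = Γ j :=
  hreal.2.1 j hodd.pos hj (Nat.odd_iff.mp hodd)

lemma map_of_even (hreal : ChiralReality d Γ) (hj : j < d) (heven : Even j) :
    (Γ j).map (starRingEnd ℂ) = (if j = 0 then (1 : ℂ) else -1) • Γ j := by
  split_ifs with h
  · rw [h, one_smul, hreal.1]
  · rw [neg_one_smul, hreal.2.2 j (Nat.pos_of_ne_zero h) hj (Nat.even_iff.mp heven)]

lemma map_mul_self_of_even (hreal : ChiralReality d Γ) (hΓ : LorentzClifford d Γ) (hj : j < d)
    (heven : Even j) : (Γ j).map (starRingEnd ℂ) * Γ j = 1 := by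
  rw [hreal.map_of_even hj heven, smul_mul_assoc, hΓ.mul_self_s10 hj, smul_smul]
  split_ifs <;> simp

lemma semiconjBy_map_neg_of_even (hreal : ChiralReality d Γ) (hΓ : LorentzClifford d Γ)
    (hi : i < d) (hj : j < d) (heven : Even i) (hij : i ≠ j) :
    SemiconjBy ((Γ i).map (starRingEnd ℂ)) (Γ j) (-Γ j) := by
  have h := hΓ.semiconjBy_neg hi hj hij
  rw [hreal.map_of_even hi heven]
  split_ifs
  · rwa [one_smul]
  · rw [neg_one_smul]
    exact h.neg_left

end ChiralReality

/-- The time-reversal matrix `M_T = Γ^0 Γ^2 ⋯ Γ^{2k}`, with factors in increasing order of the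
index. -/
def timeReversalMatrix (Γ : ℕ → Matrix α α ℂ) (k : ℕ) : Matrix α α ℂ :=
  (List.ofFn fun a : Fin (k + 1) => Γ (2 * (a : ℕ))).prod

lemma semiconjBy_timeReversalMatrix_of_odd (hΓ : LorentzClifford d Γ) (hk : 2 * k < d)
    (hj : j < d) (hodd : Odd j) :
    SemiconjBy (timeReversalMatrix Γ k) (Γ j) ((-1 : ℂ) ^ (k + 1) • Γ j) := by
  have hfactor (a : Fin (k + 1)) : SemiconjBy (Γ (2 * (a : ℕ))) (Γ j) ((-1 : ℂ) • Γ j) := by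
    rw [neg_one_smul]
    exact hΓ.semiconjBy_neg (by lia) hj (by grind)
  have h := semiconjBy_prod_ofFn_smul hfactor
  rwa [Fin.prod_const] at h

lemma semiconjBy_timeReversalMatrix_of_even (hΓ : LorentzClifford d Γ) (hk : 2 * k < d)
    (hj : j ≤ 2 * k) (heven : Even j) :
    SemiconjBy (timeReversalMatrix Γ k) (Γ j) ((-1 : ℂ) ^ k • Γ j) := by
  obtain ⟨b, rfl⟩ : ∃ b : Fin (k + 1), j = 2 * (b : ℕ) :=
    ⟨⟨j / 2, by lia⟩, (Nat.two_mul_div_two_of_even heven).symm⟩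
  have hfactor (a : Fin (k + 1)) : SemiconjBy (Γ (2 * (a : ℕ))) (Γ (2 * (b : ℕ)))
      ((if a = b then (1 : ℂ) else -1) • Γ (2 * (b : ℕ))) := by
    split_ifs with hab
    · rw [hab, one_smul]
      exact Commute.refl _
    · rw [neg_one_smul]
      exact hΓ.semiconjBy_neg (by lia) (by lia) (by lia)
  have hsign : ∏ a, (if a = b then (1 : ℂ) else -1) = (-1) ^ k := by
    simp [Fin.prod_univ_succAbove _ b, Fin.succAbove_ne]
  have h := semiconjBy_prod_ofFn_smul hfactor
  rwa [hsign] at h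

lemma map_timeReversalMatrix (Γ : ℕ → Matrix α α ℂ) (k : ℕ) :
    (timeReversalMatrix Γ k).map (starRingEnd ℂ) =
      timeReversalMatrix (fun i => (Γ i).map (starRingEnd ℂ)) k := by
  change (starRingEnd ℂ).mapMatrix _ = _
  rw [timeReversalMatrix, map_list_prod, List.map_ofFn]
  rfl

lemma map_timeReversalMatrix_mul_self (hΓ : LorentzClifford d Γ) (hreal : ChiralReality d Γ)
    (hk : 2 * k < d) :
    (timeReversalMatrix Γ k).map (starRingEnd ℂ) * timeReversalMatrix Γ k =
      (-1 : ℂ) ^ (k * (k + 1) / 2) • 1 := by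
  have hpairs : k * (k + 1) / 2 = (k + 1).choose 2 := by
    rw [Nat.choose_two_right, Nat.add_sub_cancel, mul_comm]
  rw [map_timeReversalMatrix, hpairs]
  refine prod_ofFn_mul_prod_ofFn_of_mul_eq_one (fun a b hab => ?_) fun a =>
    hreal.map_mul_self_of_even hΓ (by lia) (even_two_mul _)
  rw [neg_one_smul]
  exact hreal.semiconjBy_map_neg_of_even hΓ (by lia) (by lia) (even_two_mul _) (by lia)

lemma isUnit_timeReversalMatrix (hΓ : LorentzClifford d Γ) (hreal : ChiralReality d Γ)
    (hk : 2 * k < d) : IsUnit (timeReversalMatrix Γ k) := by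
  refine IsUnit.of_mul_eq_one_right
    ((-1 : ℂ) ^ (k * (k + 1) / 2) • (timeReversalMatrix Γ k).map (starRingEnd ℂ)) ?_
  rw [smul_mul_assoc, map_timeReversalMatrix_mul_self hΓ hreal hk, smul_smul, ← mul_pow,
    neg_one_mul, neg_neg, one_pow, one_smul]

lemma semiconjBy_timeReversalMatrix_map (hΓ : LorentzClifford (2 * k + 2) Γ)
    (hreal : ChiralReality (2 * k + 2) Γ) (hj₀ : j ≠ 0) (hj : j < 2 * k + 2) :
    SemiconjBy (timeReversalMatrix Γ k) ((Γ j).map (starRingEnd ℂ))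
      ((-1 : ℂ) ^ (k + 1) • Γ j) := by
  rcases Nat.even_or_odd j with heven | hodd
  · have h := semiconjBy_timeReversalMatrix_of_even hΓ (k := k) (by lia) (by grind) heven
    rw [hreal.map_of_even hj heven, if_neg hj₀, neg_one_smul, pow_succ, mul_neg_one, neg_smul]
    exact h.neg_right
  · rw [hreal.map_of_odd hj hodd]
    exact semiconjBy_timeReversalMatrix_of_odd hΓ (by lia) hj hodd

theorem time_reversal_matrix_k_even_general (hΓ : LorentzClifford (2 * k + 2) Γ)
    (hreal : ChiralReality (2 * k + 2) Γ) :
    let M := timeReversalMatrix Γ k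
    IsUnit M ∧
    M * (Γ 0).map (starRingEnd ℂ) * M⁻¹ = (-1 : ℂ) ^ k • Γ 0 ∧
    (∀ j, 1 ≤ j → j < 2 * k + 2 →
      M * (Γ j).map (starRingEnd ℂ) * M⁻¹ = (-1 : ℂ) ^ (k + 1) • Γ j) ∧
    M.map (starRingEnd ℂ) * M = (-1 : ℂ) ^ (k * (k + 1) / 2) • 1 := by
  intro M
  have hunit : IsUnit M := isUnit_timeReversalMatrix hΓ hreal (by lia)
  refine ⟨hunit, ?_, fun j hj₁ hj => ?_, map_timeReversalMatrix_mul_self hΓ hreal (by lia)⟩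
  · rw [hreal.1]
    exact mul_mul_inv_eq_of_semiconjBy hunit
      (semiconjBy_timeReversalMatrix_of_even hΓ (by lia) (Nat.zero_le _) Even.zero)
  · exact mul_mul_inv_eq_of_semiconjBy hunit
      (semiconjBy_timeReversalMatrix_map hΓ hreal (Nat.one_le_iff_ne_zero.mp hj₁) hj)

end GammaMatrices

/-- For `d = 2k+2` with `k` even, the time-reversal matrix `M_T = Γ^0 Γ^2 Γ^4 ⋯ Γ^{2k}`
is invertible, satisfies `M_T conj(Γ^0) M_T⁻¹ = Γ^0` and `M_T conj(Γ^j) M_T⁻¹ = -Γ^j`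
for `1 ≤ j ≤ 2k+1`, and `conj(M_T) · M_T = (-1)^{k(k+1)/2} I` (computing `T²` on a
Dirac fermion). -/
theorem time_reversal_matrix_k_even {n k : ℕ} (hk : Even k)
    (Γ : ℕ → Matrix (Fin n) (Fin n) ℂ)
    (hΓ : LorentzClifford (2 * k + 2) Γ)
    (hreal : ChiralReality (2 * k + 2) Γ)
    (M : Matrix (Fin n) (Fin n) ℂ)
    (hM : M = (List.ofFn (fun a : Fin (k + 1) => Γ (2 * (a : ℕ)))).prod) :
    IsUnit M ∧
    M * (Γ 0).map (starRingEnd ℂ) * M⁻¹ = Γ 0 ∧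
    (∀ j, 1 ≤ j → j < 2 * k + 2 → M * (Γ j).map (starRingEnd ℂ) * M⁻¹ = -(Γ j)) ∧
    M.map (starRingEnd ℂ) * M = ((-1 : ℂ) ^ (k * (k + 1) / 2)) • 1 := by
  obtain rfl : M = timeReversalMatrix Γ k := hM
  simpa [hk.neg_one_pow, pow_succ] using time_reversal_matrix_k_even_general hΓ hreal
end

section
/- Let d = 2k+3 and let Γ^0, …, Γ^{2k+2} be complex n × n matrices (n ≥ 1) satisfying the Lorentz Clifford relations such that Γ^{2k+2} = i^{k+1} Γ^0 Γ^1 ⋯ Γ^{2k+1}. If M is an invertible matrix with M conj(Γ^0) M^{−1} = Γ^0 and M conj(Γ^j) M^{−1} = −Γ^j for all j = 1, …, 2k+1, then necessarily M conj(Γ^{2k+2}) M^{−1} = (−1)^k Γ^{2k+2}. Consequently, when k is even there is no invertible matrix M satisfying M conj(Γ^0) M^{−1} = Γ^0 and M conj(Γ^j) M^{−1} = −Γ^j for all j = 1, …, 2k+2 (i.e. the Dirac mass term breaks time reversal T in spacetime dimensions d ≡ 3 mod 4). -/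
/-!
The map `T X = M * conj X * M⁻¹` is multiplicative and antilinear. On `Γ^0 ⋯ Γ^{2k+1}` it acts by
one sign for each of the `2k+1` spatial factors, and antilinearity turns the prefactor `i^{k+1}`
into `(-1)^{k+1} i^{k+1}`; the total sign is `(-1)^{3k+2} = (-1)^k`. For even `k` the matrix
`Γ^{2k+2}` is thus fixed by `T`, so `T` can also flip it only if it vanishes, whereas it squares
to `-1`.
-/

open Matrix

theorem LorentzClifford.ne_zero {α : Type*} [Fintype α] [DecidableEq α] [Nonempty α] {d : ℕ}
    {Γ : ℕ → Matrix α α ℂ} (hΓ : LorentzClifford d Γ) {μ : ℕ} (hμ : μ < d) : Γ μ ≠ 0 := by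
  intro h0
  have hsq := hΓ μ hμ μ hμ
  rw [h0, mul_zero, add_zero, if_pos rfl] at hsq
  refine smul_ne_zero ?_ one_ne_zero hsq.symm
  split_ifs <;> norm_num

section SignOfProduct

variable {R F : Type*} [Monoid R] [HasDistribNeg R] [FunLike F R R] [MonoidHomClass F R R]

theorem map_list_prod_of_forall_map_eq_neg (φ : F) {l : List R} (h : ∀ x ∈ l, φ x = -x) :
    φ l.prod = (-1) ^ l.length * l.prod := by
  rw [map_list_prod, List.map_congr_left h, ← List.prod_map_neg]

theorem map_prod_range_succ_of_map_eq_neg (φ : F) {f : ℕ → R} {m : ℕ} (h0 : φ (f 0) = f 0)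
    (hneg : ∀ j < m, φ (f (j + 1)) = -f (j + 1)) :
    φ ((List.range (m + 1)).map f).prod = (-1) ^ m * ((List.range (m + 1)).map f).prod := by
  have htail := map_list_prod_of_forall_map_eq_neg φ (l := (List.range m).map (f ∘ Nat.succ))
    (by simpa using hneg)
  rw [List.length_map, List.length_range] at htail
  rw [List.range_succ_eq_map, List.map_cons, List.map_map, List.prod_cons, map_mul, h0, htail,
    ← mul_assoc, ← mul_assoc, ((Commute.neg_one_right (f 0)).pow_right m).eq]

end SignOfProduct

section TimeReversal

variable {ι R : Type*} [Fintype ι] [DecidableEq ι] [CommRing R] [StarRing R]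

/-- The action `X ↦ M * conj X * M⁻¹` of the time reversal operator with matrix `M`. It is
antilinear, hence bundled only as a ring homomorphism; `M` is a unit so that the inverse is
genuine. -/
def timeReversal (M : (Matrix ι ι R)ˣ) : Matrix ι ι R →+* Matrix ι ι R :=
  (MulSemiringAction.toRingHom _ _ (ConjAct.toConjAct M)).comp (starRingEnd R).mapMatrix

theorem timeReversal_apply (M : (Matrix ι ι R)ˣ) (X : Matrix ι ι R) :
    timeReversal M X = M * X.map (starRingEnd R) * (M : Matrix ι ι R)⁻¹ := by
  rw [← coe_units_inv]
  rfl

theorem timeReversal_smul (M : (Matrix ι ι R)ˣ) (c : R) (X : Matrix ι ι R) :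
    timeReversal M (c • X) = starRingEnd R c • timeReversal M X := by
  simp only [timeReversal_apply, Matrix.map_smul' _ _ _ (map_mul (starRingEnd R)),
    Matrix.mul_smul, Matrix.smul_mul]

theorem timeReversal_smul_prod_range_succ (M : (Matrix ι ι R)ˣ) {Γ : ℕ → Matrix ι ι R} (c : R)
    {m : ℕ} (h0 : timeReversal M (Γ 0) = Γ 0)
    (hneg : ∀ j < m, timeReversal M (Γ (j + 1)) = -Γ (j + 1)) :
    timeReversal M (c • ((List.range (m + 1)).map Γ).prod) =
      (starRingEnd R c * (-1) ^ m) • ((List.range (m + 1)).map Γ).prod := by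
  rw [timeReversal_smul, map_prod_range_succ_of_map_eq_neg _ h0 hneg, mul_smul,
    Algebra.smul_def ((-1) ^ m : R), map_pow, map_neg, map_one]

theorem timeReversal_I_pow_smul_prod_range (M : (Matrix ι ι ℂ)ˣ) {Γ : ℕ → Matrix ι ι ℂ} {k : ℕ}
    (h0 : timeReversal M (Γ 0) = Γ 0)
    (hneg : ∀ j < 2 * k + 1, timeReversal M (Γ (j + 1)) = -Γ (j + 1)) :
    timeReversal M (Complex.I ^ (k + 1) • ((List.range (2 * k + 2)).map Γ).prod) =
      (-1 : ℂ) ^ k • Complex.I ^ (k + 1) • ((List.range (2 * k + 2)).map Γ).prod := by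
  have hphase : starRingEnd ℂ (Complex.I ^ (k + 1)) * (-1) ^ (2 * k + 1) =
      (-1) ^ k * Complex.I ^ (k + 1) := by
    rw [map_pow, Complex.conj_I, neg_pow, (odd_two_mul_add_one k).neg_one_pow]
    ring
  rw [timeReversal_smul_prod_range_succ M _ h0 hneg, hphase, mul_smul]

end TimeReversal

theorem mass_breaks_T_odd_d_general {ι : Type*} [Fintype ι] [DecidableEq ι] {k : ℕ}
    (Γ : ℕ → Matrix ι ι ℂ)
    (hlast : Γ (2 * k + 2) = Complex.I ^ (k + 1) • ((List.range (2 * k + 2)).map Γ).prod) :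
    (∀ M : Matrix ι ι ℂ, IsUnit M →
      M * (Γ 0).map (starRingEnd ℂ) * M⁻¹ = Γ 0 →
      (∀ j, 1 ≤ j → j < 2 * k + 2 → M * (Γ j).map (starRingEnd ℂ) * M⁻¹ = -(Γ j)) →
      M * (Γ (2 * k + 2)).map (starRingEnd ℂ) * M⁻¹ = ((-1 : ℂ) ^ k) • Γ (2 * k + 2)) ∧
    (Even k → Γ (2 * k + 2) ≠ 0 → ¬ ∃ M : Matrix ι ι ℂ, IsUnit M ∧
      M * (Γ 0).map (starRingEnd ℂ) * M⁻¹ = Γ 0 ∧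
      ∀ j, 1 ≤ j → j < 2 * k + 3 → M * (Γ j).map (starRingEnd ℂ) * M⁻¹ = -(Γ j)) := by
  have hsign (M : (Matrix ι ι ℂ)ˣ) (h0 : timeReversal M (Γ 0) = Γ 0)
      (hneg : ∀ j, 1 ≤ j → j < 2 * k + 2 → timeReversal M (Γ j) = -Γ j) :
      timeReversal M (Γ (2 * k + 2)) = (-1 : ℂ) ^ k • Γ (2 * k + 2) := by
    rw [hlast]
    exact timeReversal_I_pow_smul_prod_range M h0 fun j hj ↦ hneg (j + 1) (by lia) (by lia)
  constructor
  · rintro _ ⟨M, rfl⟩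
    simpa only [timeReversal_apply] using hsign M
  · rintro hk hne ⟨_, ⟨M, rfl⟩, h0, hneg⟩
    simp only [← timeReversal_apply] at h0 hneg
    have hfix := hsign M h0 fun j hj hj' ↦ hneg j hj (by lia)
    rw [hk.neg_one_pow, one_smul, hneg _ (by lia) (by lia)] at hfix
    have : IsAddTorsionFree (Matrix ι ι ℂ) := .of_isTorsionFree ℂ _
    exact hne (self_eq_neg.mp hfix.symm)

/-- For odd `d = 2k+3` with `Γ^{2k+2} = i^{k+1} Γ^0 ⋯ Γ^{2k+1}`: any invertible `M` with
`M conj(Γ^0) M⁻¹ = Γ^0` and `M conj(Γ^j) M⁻¹ = -Γ^j` for `1 ≤ j ≤ 2k+1` necessarily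
satisfies `M conj(Γ^{2k+2}) M⁻¹ = (-1)^k Γ^{2k+2}`; hence for even `k` there is no
invertible `M` with those relations for all `j = 1, …, 2k+2` (the Dirac mass term breaks
time reversal `T` in spacetime dimensions `d ≡ 3 mod 4`). -/
theorem mass_breaks_T_odd_d {n k : ℕ} (hn : 1 ≤ n)
    (Γ : ℕ → Matrix (Fin n) (Fin n) ℂ)
    (hΓ : LorentzClifford (2 * k + 3) Γ)
    (hlast : Γ (2 * k + 2) = Complex.I ^ (k + 1) • ((List.range (2 * k + 2)).map Γ).prod) :
    (∀ M : Matrix (Fin n) (Fin n) ℂ, IsUnit M →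
      M * (Γ 0).map (starRingEnd ℂ) * M⁻¹ = Γ 0 →
      (∀ j, 1 ≤ j → j < 2 * k + 2 → M * (Γ j).map (starRingEnd ℂ) * M⁻¹ = -(Γ j)) →
      M * (Γ (2 * k + 2)).map (starRingEnd ℂ) * M⁻¹ = ((-1 : ℂ) ^ k) • Γ (2 * k + 2)) ∧
    (Even k → ¬ ∃ M : Matrix (Fin n) (Fin n) ℂ, IsUnit M ∧
      M * (Γ 0).map (starRingEnd ℂ) * M⁻¹ = Γ 0 ∧
      ∀ j, 1 ≤ j → j < 2 * k + 3 → M * (Γ j).map (starRingEnd ℂ) * M⁻¹ = -(Γ j)) := by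
  have : Nonempty (Fin n) := ⟨⟨0, hn⟩⟩
  exact (mass_breaks_T_odd_d_general Γ hlast).imp_right fun h hk ↦ h hk (hΓ.ne_zero (by lia))
end

section
/- Let d = 2k+3 and let Γ^0, …, Γ^{2k+2} be complex n × n matrices (n ≥ 1) satisfying the Lorentz Clifford relations such that Γ^{2k+2} = i^{k+1} Γ^0 Γ^1 ⋯ Γ^{2k+1}. Then for every j ∈ {1, …, 2k+2} there is no invertible matrix M satisfying M Γ^0 M^{−1} = Γ^0, M Γ^j M^{−1} = −Γ^j, and M Γ^i M^{−1} = Γ^i for all i ∈ {1, …, 2k+2} with i ≠ j (i.e. the Dirac mass term breaks the mirror reflection R_j in every odd spacetime dimension). -/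
/-!
An algebra endomorphism that sends each `Γ^i` to `ε_i Γ^i`, with signs `ε_i`, multiplies
`Γ^0 ⋯ Γ^{m-1}` by `ε_0 ⋯ ε_{m-1}`. If `Γ^m` is a scalar multiple of that product and is not its own
negative, comparing the two signs of `Γ^m` forces `ε_0 ⋯ ε_m = 1`. A mirror reflection has
`ε_0 ⋯ ε_m = -1`, so in particular conjugation by a matrix cannot implement it.
-/

open Matrix

lemma LorentzClifford.ne_neg {α : Type*} [Fintype α] [DecidableEq α] [Nonempty α] {d μ : ℕ}
    {Γ : ℕ → Matrix α α ℂ} (hΓ : LorentzClifford d Γ) (hμ : μ < d) : Γ μ ≠ -Γ μ := by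
  intro h
  have hsq := hΓ μ hμ μ hμ
  rw [← add_mul, add_eq_zero_iff_eq_neg.2 h, zero_mul, if_pos rfl] at hsq
  have htwo : (if μ = 0 then (2 : ℂ) else -2) ≠ 0 := by split_ifs <;> norm_num
  exact smul_ne_zero htwo one_ne_zero hsq.symm

/-- Conjugation `x ↦ u * x * u⁻¹` by a unit `u` of an `R`-algebra, the inner automorphism by which a
matrix acts on the `Γ^i`, regarded as an endomorphism. -/
def conjAlgHom (R : Type*) {A : Type*} [CommSemiring R] [Semiring A] [Algebra R A] (u : Aˣ) :
    A →ₐ[R] A :=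
  MulSemiringAction.toAlgHom R A (ConjAct.toConjAct u)

lemma conjAlgHom_matrix_apply {R α : Type*} [CommRing R] [Fintype α] [DecidableEq α]
    (M : (Matrix α α R)ˣ) (X : Matrix α α R) :
    conjAlgHom R M X = M * X * (M : Matrix α α R)⁻¹ := by
  rw [← coe_units_inv]
  rfl

lemma map_list_prod_eq_prod_smul {ι S A B F : Type*} [Monoid S] [Monoid A] [Monoid B]
    [MulAction S B] [IsScalarTower S B B] [SMulCommClass S B B] [FunLike F A B]
    [MonoidHomClass F A B] (φ : F) {Γ : ι → A} {Γ' : ι → B} {ε : ι → S} (l : List ι)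
    (h : ∀ i ∈ l, φ (Γ i) = ε i • Γ' i) :
    φ (l.map Γ).prod = (l.map ε).prod • (l.map Γ').prod := by
  induction l with
  | nil => simp
  | cons i l ih =>
    rw [List.forall_mem_cons] at h
    simp only [List.map_cons, List.prod_cons, map_mul, h.1, ih h.2, smul_mul_smul_comm]

section

variable {R A : Type*} [CommSemiring R] [Ring A] [Algebra R A] {m : ℕ} {Γ : ℕ → A} {c : R}

lemma prod_signs_eq_one_of_map_eq_smul (φ : A →ₐ[R] A) {ε : ℕ → ℤˣ}
    (hlast : Γ m = c • ((List.range m).map Γ).prod) (hne : Γ m ≠ -Γ m)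
    (hφ : ∀ i ≤ m, φ (Γ i) = ε i • Γ i) :
    ∏ i ∈ Finset.range (m + 1), ε i = 1 := by
  have hprod : φ (Γ m) = (∏ i ∈ Finset.range m, ε i) • Γ m :=
    calc φ (Γ m) = c • φ ((List.range m).map Γ).prod := by rw [hlast, map_smul]
      _ = c • (∏ i ∈ Finset.range m, ε i) • ((List.range m).map Γ).prod :=
        congrArg (c • ·) <| map_list_prod_eq_prod_smul φ _ fun i hi =>
          hφ i (List.mem_range.1 hi).le
      _ = (∏ i ∈ Finset.range m, ε i) • Γ m := by rw [smul_comm, ← hlast]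
  have hfix : (∏ i ∈ Finset.range (m + 1), ε i) • Γ m = Γ m := by
    rw [Finset.prod_range_succ_comm, mul_smul, ← hprod, hφ m le_rfl, smul_smul, Int.units_mul_self,
      one_smul]
  refine (Int.units_eq_one_or _).resolve_right fun hneg => hne ?_
  rw [hneg, Units.neg_smul, one_smul] at hfix
  exact hfix.symm

theorem mass_breaks_R_odd_d_general (hlast : Γ m = c • ((List.range m).map Γ).prod)
    (hne : Γ m ≠ -Γ m) {j : ℕ} (hj : j ≤ m) :
    ¬ ∃ φ : A →ₐ[R] A, φ (Γ j) = -Γ j ∧ ∀ i ≤ m, i ≠ j → φ (Γ i) = Γ i := by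
  rintro ⟨φ, hneg, hfix⟩
  have hφ : ∀ i ≤ m, φ (Γ i) = (Pi.mulSingle j (-1) : ℕ → ℤˣ) i • Γ i := by
    intro i hi
    obtain rfl | hij := eq_or_ne i j
    · rw [hneg, Pi.mulSingle_eq_same, Units.neg_smul, one_smul]
    · rw [hfix i hi hij, Pi.mulSingle_eq_of_ne hij, one_smul]
  have hsign := prod_signs_eq_one_of_map_eq_smul φ hlast hne hφ
  rw [Finset.prod_pi_mulSingle', if_pos (Finset.mem_range_succ_iff.2 hj)] at hsign
  exact absurd hsign (by decide)

end

/-- For odd `d = 2k+3` with `Γ^{2k+2} = i^{k+1} Γ^0 ⋯ Γ^{2k+1}`, for every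
`j ∈ {1, …, 2k+2}` there is no invertible matrix `M` with `M Γ^0 M⁻¹ = Γ^0`,
`M Γ^j M⁻¹ = -Γ^j` and `M Γ^i M⁻¹ = Γ^i` for all `i ≠ j` (the Dirac mass term breaks
the mirror reflection `R_j` in every odd spacetime dimension). -/
theorem mass_breaks_R_odd_d {n k : ℕ} (hn : 1 ≤ n)
    (Γ : ℕ → Matrix (Fin n) (Fin n) ℂ)
    (hΓ : LorentzClifford (2 * k + 3) Γ)
    (hlast : Γ (2 * k + 2) = Complex.I ^ (k + 1) • ((List.range (2 * k + 2)).map Γ).prod) :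
    ∀ j, 1 ≤ j → j < 2 * k + 3 →
      ¬ ∃ M : Matrix (Fin n) (Fin n) ℂ, IsUnit M ∧
        M * Γ 0 * M⁻¹ = Γ 0 ∧
        M * Γ j * M⁻¹ = -(Γ j) ∧
        ∀ i, 1 ≤ i → i < 2 * k + 3 → i ≠ j → M * Γ i * M⁻¹ = Γ i := by
  rintro j - hj ⟨_, ⟨M, rfl⟩, h0, hneg, hfix⟩
  have : NeZero n := ⟨by omega⟩
  simp only [← conjAlgHom_matrix_apply] at h0 hneg hfix
  exact mass_breaks_R_odd_d_general hlast (hΓ.ne_neg (by omega)) (by omega) ⟨conjAlgHom ℂ M, hneg,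
    fun i hi hij => i.eq_zero_or_pos.elim (· ▸ h0) fun hpos => hfix i hpos (by omega) hij⟩
end

section
/- Let d = 2k+2 and let Γ^0, …, Γ^{2k+1} be complex n × n matrices satisfying the Lorentz Clifford relations and the chiral reality pattern, and fix j ∈ {1, …, 2k+1}. Set M_R := Γ^0 Γ^1 ⋯ Γ^{j−1} Γ^{j+1} ⋯ Γ^{2k+1}. If k is odd, set M_C := Γ^2 Γ^4 ⋯ Γ^{2k}; then M_R M_C conj(M_R) conj(M_C) = (−1)^{k(k−1)/2} I. If k is even, set M_C := Γ^0 Γ^1 Γ^3 ⋯ Γ^{2k+1}; then M_R M_C conj(M_R) conj(M_C) = −(−1)^{k(k+1)/2} I. (These identities compute (CR_j)^2 on a Dirac fermion; the result is independent of the phases η_C, η_{R_j}.) -/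
open Matrix

/-!
Each `Γ^i` satisfies `Γ^i conj(Γ^i) = (-1)^i`: this one relation is all that the metric and the
reality pattern contribute. Moreover `Γ^a` anticommutes with `conj(Γ^b)` for `a ≠ b` and commutes
with `conj(Γ^a)`. Hence, with `C` the set of indices of `M_C`, moving `M_C` past `conj(M_R)` costs
only `(-1)^[j ∈ C]`, because `M_R` has an odd number of factors and misses exactly `Γ^j`. What is
left is `(M_R conj(M_R)) (M_C conj(M_C))`. In each bracket, pairing every `Γ^i` with its conjugate
gives the sign `(-1)^(l.choose 2)` for `l` factors, times `(-1)` to the sum of the indices. For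
`M_R` this is `(-1)^(1 + j)`, so the total sign is
`(-1)^(1 + j + [j ∈ C] + |C|.choose 2 + ∑ C)`. Whether `j ∈ C` is decided by the parity of `j`, so
the dependence on `j` cancels.
-/

section AnticommutingPair

variable {ι A : Type*} [Monoid A] [HasDistribNeg A]

/-- Two families `γ` and `δ`, indexed by `s`, such that `γ a` anticommutes with `δ b` for `a ≠ b`
and commutes with `δ a`. It is used for a family of gamma matrices and its complex conjugate. -/
structure IsAnticommutingPair (s : Set ι) (γ δ : ι → A) : Prop where
  anticomm : ∀ a ∈ s, ∀ b ∈ s, a ≠ b → γ a * δ b = -(δ b * γ a)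
  comm : ∀ a ∈ s, γ a * δ a = δ a * γ a

lemma mul_neg_one_pow_mul (n : ℕ) (x y : A) : x * ((-1) ^ n * y) = (-1) ^ n * (x * y) :=
  ((Commute.neg_one_right x).pow_right n).left_comm y

namespace IsAnticommutingPair

variable {s : Set ι} {γ δ : ι → A}

lemma mul_prod_map [DecidableEq ι] (h : IsAnticommutingPair s γ δ) {a : ι} (ha : a ∈ s)
    {l : List ι} (hl : ∀ i ∈ l, i ∈ s) :
    γ a * (l.map δ).prod = (-1) ^ (l.length + l.count a) * ((l.map δ).prod * γ a) := by
  induction l with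
  | nil => simp
  | cons b l ih =>
    obtain ⟨hb, hl⟩ := List.forall_mem_cons.mp hl
    have hab : γ a * δ b = (-1) ^ (1 + if b = a then 1 else 0) * (δ b * γ a) := by
      split_ifs with hba
      · subst hba
        simp [h.comm b hb]
      · simp [h.anticomm a ha b hb (Ne.symm hba)]
    rw [List.map_cons, List.prod_cons, ← mul_assoc, hab, mul_assoc, mul_assoc, ih hl,
      mul_neg_one_pow_mul, ← mul_assoc, ← pow_add, ← mul_assoc (δ b)]
    congr 2
    rw [List.length_cons, List.count_cons]
    simp only [beq_iff_eq]
    ring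

/-- The sum in the exponent cancels the signs of the pairs of equal entries, which commute. -/
lemma prod_map_mul_prod_map [DecidableEq ι] (h : IsAnticommutingPair s γ δ)
    {l₁ l₂ : List ι} (hl₁ : ∀ i ∈ l₁, i ∈ s) (hl₂ : ∀ i ∈ l₂, i ∈ s) :
    (l₁.map γ).prod * (l₂.map δ).prod =
      (-1) ^ (l₁.length * l₂.length + (l₁.map (l₂.count ·)).sum) *
        ((l₂.map δ).prod * (l₁.map γ).prod) := by
  induction l₁ with
  | nil => simp
  | cons a l₁ ih =>
    obtain ⟨ha, hl₁⟩ := List.forall_mem_cons.mp hl₁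
    rw [List.map_cons, List.prod_cons, mul_assoc, ih hl₁, mul_neg_one_pow_mul,
      ← mul_assoc (γ a), h.mul_prod_map ha hl₂, mul_assoc, ← mul_assoc, ← pow_add, mul_assoc]
    congr 2
    rw [List.length_cons, List.map_cons, List.sum_cons]
    ring

lemma prod_map_mul_prod_map_self (h : IsAnticommutingPair s γ δ) {e : ι → ℕ} {l : List ι}
    (hmul : ∀ i ∈ l, γ i * δ i = (-1) ^ e i) (hl : ∀ i ∈ l, i ∈ s) (hnd : l.Nodup) :
    (l.map γ).prod * (l.map δ).prod = (-1) ^ (l.length.choose 2 + (l.map e).sum) := by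
  classical
  induction l using List.reverseRecOn with
  | nil => simp
  | append_singleton l a ih =>
    simp only [List.forall_mem_append, List.forall_mem_singleton] at hl hmul
    obtain ⟨ha, hnd⟩ := l.nodup_concat a |>.mp (by rwa [List.concat_eq_append])
    calc ((l ++ [a]).map γ).prod * ((l ++ [a]).map δ).prod
        = (l.map γ).prod * ((γ a * (l.map δ).prod) * δ a) := by
          simp only [List.map_append, List.map_singleton, List.prod_append, List.prod_singleton,
            mul_assoc]
      _ = (-1) ^ l.length * (((l.map γ).prod * (l.map δ).prod) * (γ a * δ a)) := by
          rw [h.mul_prod_map hl.2 hl.1, List.count_eq_zero_of_not_mem ha, add_zero, mul_assoc,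
            mul_neg_one_pow_mul]
          simp only [mul_assoc]
      _ = (-1) ^ ((l ++ [a]).length.choose 2 + ((l ++ [a]).map e).sum) := by
          rw [ih hmul.1 hl.1 hnd, hmul.2, ← pow_add, ← pow_add, List.length_append,
            List.length_singleton, Nat.choose_succ_succ' l.length 1, Nat.choose_one_right,
            List.map_append, List.sum_append, List.map_singleton, List.sum_singleton]
          congr 1
          ring

end IsAnticommutingPair

end AnticommutingPair

section Indices

/-- The indices `0, …, ĵ, …, 2k+1` of the factors of `M_R`. -/
def reflectionIndices (k j : ℕ) : List ℕ := (List.range (2 * k + 2)).filter (fun i => i ≠ j)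

/-- The indices `2, 4, …, 2k` of the imaginary gamma matrices: the factors of `M_C` for odd `k`. -/
def imaginaryIndices (k : ℕ) : List ℕ := List.ofFn fun a : Fin k => 2 * ((a : ℕ) + 1)

/-- The indices `0, 1, 3, …, 2k+1` of the real gamma matrices: the factors of `M_C` for even
`k`. -/
def realIndices (k : ℕ) : List ℕ := 0 :: List.ofFn fun a : Fin (k + 1) => 2 * (a : ℕ) + 1

variable {i j k : ℕ}

lemma mem_reflectionIndices : i ∈ reflectionIndices k j ↔ i < 2 * k + 2 ∧ i ≠ j := by
  simp [reflectionIndices]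

lemma nodup_reflectionIndices : (reflectionIndices k j).Nodup := List.nodup_range.filter _

lemma reflectionIndices_eq_erase : reflectionIndices k j = (List.range (2 * k + 2)).erase j := by
  rw [List.nodup_range.erase_eq_filter]
  exact List.filter_congr fun i _ => by by_cases h : i = j <;> simp [h]

lemma length_reflectionIndices (hj : j < 2 * k + 2) :
    (reflectionIndices k j).length = 2 * k + 1 := by
  rw [reflectionIndices_eq_erase, List.length_erase_of_mem (List.mem_range.mpr hj),
    List.length_range, Nat.add_succ_sub_one]

lemma sum_reflectionIndices (hj : j < 2 * k + 2) :
    j + (reflectionIndices k j).sum = (k + 1) * (2 * k + 1) := by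
  rw [reflectionIndices_eq_erase, List.sum_erase (List.mem_range.mpr hj)]
  have hrange : (List.range (2 * k + 2)).sum = ∑ i ∈ Finset.range (2 * k + 2), i := by
    rw [← List.toFinset_range, List.sum_toFinset _ List.nodup_range, List.map_id']
  rw [hrange, ← Nat.mul_left_inj two_ne_zero, Finset.sum_range_id_mul_two, Nat.add_succ_sub_one]
  ring

lemma count_reflectionIndices (hi : i < 2 * k + 2) :
    (reflectionIndices k j).count i = if i = j then 0 else 1 := by
  simp [nodup_reflectionIndices.count, mem_reflectionIndices, hi]

lemma sum_count_reflectionIndices {l : List ℕ} (hl : ∀ i ∈ l, i < 2 * k + 2) :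
    (l.map ((reflectionIndices k j).count ·)).sum + l.count j = l.length := by
  induction l with
  | nil => rfl
  | cons i l ih =>
    obtain ⟨hi, hl⟩ := List.forall_mem_cons.mp hl
    specialize ih hl
    simp only [List.map_cons, List.sum_cons, List.count_cons, List.length_cons,
      count_reflectionIndices hi, beq_iff_eq]
    split_ifs <;> omega

lemma mem_imaginaryIndices : i ∈ imaginaryIndices k ↔ i ≠ 0 ∧ i < 2 * k + 2 ∧ Even i := by
  rw [imaginaryIndices, List.mem_ofFn', Set.mem_range]
  constructor
  · rintro ⟨a, rfl⟩
    grind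
  · rintro ⟨h0, hlt, m, rfl⟩
    exact ⟨⟨m - 1, by omega⟩, by grind⟩

lemma nodup_imaginaryIndices : (imaginaryIndices k).Nodup :=
  List.nodup_ofFn.mpr fun a b hab => by grind

lemma count_imaginaryIndices (hi0 : i ≠ 0) (hi : i < 2 * k + 2) :
    (imaginaryIndices k).count i = if Even i then 1 else 0 := by
  simp only [nodup_imaginaryIndices.count, mem_imaginaryIndices, ne_eq, hi0, not_false_eq_true, hi,
    true_and]

lemma length_imaginaryIndices : (imaginaryIndices k).length = k := List.length_ofFn

lemma even_sum_imaginaryIndices : Even (imaginaryIndices k).sum := by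
  rw [imaginaryIndices, List.sum_ofFn]
  exact Finset.even_sum _ fun _ _ => even_two_mul _

lemma mem_realIndices : i ∈ realIndices k ↔ i = 0 ∨ i < 2 * k + 2 ∧ Odd i := by
  rw [realIndices, List.mem_cons, List.mem_ofFn', Set.mem_range]
  refine or_congr_right ⟨?_, ?_⟩
  · rintro ⟨a, rfl⟩
    grind
  · rintro ⟨hlt, m, rfl⟩
    exact ⟨⟨m, by omega⟩, rfl⟩

lemma nodup_realIndices : (realIndices k).Nodup :=
  List.nodup_cons.mpr ⟨by simp, List.nodup_ofFn.mpr fun a b hab => by grind⟩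

lemma count_realIndices (hi0 : i ≠ 0) (hi : i < 2 * k + 2) :
    (realIndices k).count i = if Odd i then 1 else 0 := by
  simp only [nodup_realIndices.count, mem_realIndices, hi0, hi, false_or, true_and]

lemma length_realIndices : (realIndices k).length = k + 2 := by
  simp [realIndices]

lemma sum_realIndices : (realIndices k).sum = (k + 1) ^ 2 := by
  rw [realIndices, List.sum_cons, List.sum_ofFn, Fin.sum_univ_eq_sum_range (2 * · + 1), zero_add]
  induction k with
  | zero => rfl
  | succ k ih =>
    rw [Finset.sum_range_succ, ih]
    ring

lemma prod_map_imaginaryIndices {A : Type*} [Monoid A] (γ : ℕ → A) (k : ℕ) :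
    ((imaginaryIndices k).map γ).prod =
      (List.ofFn fun a : Fin k => γ (2 * ((a : ℕ) + 1))).prod := by
  simp only [imaginaryIndices, List.map_ofFn, Function.comp_def]

lemma prod_map_realIndices {A : Type*} [Monoid A] (γ : ℕ → A) (k : ℕ) :
    ((realIndices k).map γ).prod =
      γ 0 * (List.ofFn fun a : Fin (k + 1) => γ (2 * (a : ℕ) + 1)).prod := by
  simp only [realIndices, List.map_cons, List.prod_cons, List.map_ofFn, Function.comp_def]

end Indices

section ChargeReflection

variable {A : Type*} [Monoid A] [HasDistribNeg A] {k j : ℕ} {γ δ : ℕ → A}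

namespace IsAnticommutingPair

lemma prod_reflectionIndices_mul_self (h : IsAnticommutingPair (Set.Iio (2 * k + 2)) γ δ)
    (hmul : ∀ i < 2 * k + 2, γ i * δ i = (-1) ^ i) (hj : j < 2 * k + 2) :
    ((reflectionIndices k j).map γ).prod * ((reflectionIndices k j).map δ).prod =
      (-1) ^ (1 + j) := by
  have hR : ∀ i ∈ reflectionIndices k j, i < 2 * k + 2 := fun i hi =>
    (mem_reflectionIndices.mp hi).1
  rw [h.prod_map_mul_prod_map_self (e := id) (fun i hi => hmul i (hR i hi)) hR
    nodup_reflectionIndices, List.map_id, length_reflectionIndices hj]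
  have hchoose : (2 * k + 1).choose 2 = k * (2 * k + 1) := by
    rw [Nat.choose_two_right, Nat.add_sub_cancel, mul_left_comm, Nat.mul_div_cancel_left _ two_pos,
      mul_comm]
  have hsum := sum_reflectionIndices hj
  have htotal : (2 * k + 1).choose 2 + (reflectionIndices k j).sum + j = (2 * k + 1) ^ 2 := by
    rw [hchoose]
    linarith
  have hodd : Odd ((2 * k + 1).choose 2 + (reflectionIndices k j).sum + j) := by
    rw [htotal]
    exact (odd_two_mul_add_one k).pow
  rw [Nat.odd_add, ← Nat.not_even_iff_odd] at hodd
  refine neg_one_pow_congr ?_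
  rw [add_comm 1 j, Nat.even_add_one]
  tauto

lemma prod_map_mul_prod_reflectionIndices
    (h : IsAnticommutingPair (Set.Iio (2 * k + 2)) γ δ) (hj : j < 2 * k + 2) {C : List ℕ}
    (hC : ∀ i ∈ C, i < 2 * k + 2) :
    (C.map γ).prod * ((reflectionIndices k j).map δ).prod =
      (-1) ^ C.count j * (((reflectionIndices k j).map δ).prod * (C.map γ).prod) := by
  rw [h.prod_map_mul_prod_map hC fun i hi => (mem_reflectionIndices.mp hi).1,
    length_reflectionIndices hj]
  congr 1
  have hcount := sum_count_reflectionIndices (j := j) hC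
  exact neg_one_pow_congr (by grind)

lemma prod_reflectionIndices_mul_prod_map_mul_self
    (h : IsAnticommutingPair (Set.Iio (2 * k + 2)) γ δ)
    (hmul : ∀ i < 2 * k + 2, γ i * δ i = (-1) ^ i) (hj : j < 2 * k + 2) {C : List ℕ}
    (hC : ∀ i ∈ C, i < 2 * k + 2) (hnd : C.Nodup) :
    ((reflectionIndices k j).map γ).prod * (C.map γ).prod *
        ((reflectionIndices k j).map δ).prod * (C.map δ).prod =
      (-1) ^ (1 + j + C.count j + C.length.choose 2 + C.sum) := by
  have hCC : (C.map γ).prod * (C.map δ).prod = (-1) ^ (C.length.choose 2 + C.sum) := by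
    simpa only [id_eq, List.map_id] using
      h.prod_map_mul_prod_map_self (e := id) (fun i hi => hmul i (hC i hi)) hC hnd
  calc ((reflectionIndices k j).map γ).prod * (C.map γ).prod *
        ((reflectionIndices k j).map δ).prod * (C.map δ).prod
      = (-1) ^ C.count j *
          ((((reflectionIndices k j).map γ).prod * ((reflectionIndices k j).map δ).prod) *
            ((C.map γ).prod * (C.map δ).prod)) := by
        rw [mul_assoc _ (C.map γ).prod, h.prod_map_mul_prod_reflectionIndices hj hC,
          mul_neg_one_pow_mul]
        simp only [mul_assoc]
    _ = (-1) ^ (1 + j + C.count j + C.length.choose 2 + C.sum) := by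
        rw [h.prod_reflectionIndices_mul_self hmul hj, hCC, ← pow_add, ← pow_add]
        congr 1
        ring

end IsAnticommutingPair

theorem CR_square_general (hj1 : 1 ≤ j) (hj2 : j ≤ 2 * k + 1)
    (h : IsAnticommutingPair (Set.Iio (2 * k + 2)) γ δ)
    (hmul : ∀ i < 2 * k + 2, γ i * δ i = (-1) ^ i) :
    ((reflectionIndices k j).map γ).prod * ((imaginaryIndices k).map γ).prod *
        ((reflectionIndices k j).map δ).prod * ((imaginaryIndices k).map δ).prod =
      (-1) ^ (k * (k - 1) / 2) ∧
    ((reflectionIndices k j).map γ).prod * ((realIndices k).map γ).prod *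
        ((reflectionIndices k j).map δ).prod * ((realIndices k).map δ).prod =
      -(-1) ^ (k * (k + 1) / 2) := by
  have hj0 : j ≠ 0 := Nat.one_le_iff_ne_zero.mp hj1
  have hj : j < 2 * k + 2 := Nat.lt_succ_of_le hj2
  constructor
  · have hC : ∀ i ∈ imaginaryIndices k, i < 2 * k + 2 := fun i hi =>
      (mem_imaginaryIndices.mp hi).2.1
    have hsum : Even (imaginaryIndices k).sum := even_sum_imaginaryIndices
    rw [h.prod_reflectionIndices_mul_prod_map_mul_self hmul hj hC nodup_imaginaryIndices,
      count_imaginaryIndices hj0 hj, length_imaginaryIndices, ← Nat.choose_two_right]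
    exact neg_one_pow_congr (by grind)
  · have hC : ∀ i ∈ realIndices k, i < 2 * k + 2 := by grind [mem_realIndices]
    have hchoose : (k + 2).choose 2 = k + 1 + k * (k + 1) / 2 := by
      rw [Nat.choose_succ_succ' (k + 1) 1, Nat.choose_one_right, Nat.choose_two_right,
        Nat.add_sub_cancel, mul_comm]
    rw [h.prod_reflectionIndices_mul_prod_map_mul_self hmul hj hC nodup_realIndices,
      count_realIndices hj0 hj, length_realIndices, hchoose, sum_realIndices,
      ← neg_one_mul (_ ^ _), ← pow_succ']
    exact neg_one_pow_congr (by grind)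

end ChargeReflection

section GammaMatrices

variable {α : Type*} [Fintype α] [DecidableEq α] {d i : ℕ} {Γ : ℕ → Matrix α α ℂ}

lemma LorentzClifford.anticomm (hΓ : LorentzClifford d Γ) {a b : ℕ} (ha : a < d) (hb : b < d)
    (hab : a ≠ b) : Γ a * Γ b = -(Γ b * Γ a) := by
  simpa only [if_neg hab, add_eq_zero_iff_eq_neg] using hΓ a ha b hb

lemma LorentzClifford.mul_self_s15 (hΓ : LorentzClifford d Γ) (hi : i < d) :
    Γ i * Γ i = if i = 0 then 1 else -1 := by
  have htwice : (2 : ℂ) • (Γ i * Γ i) = (2 : ℂ) • if i = 0 then 1 else -1 := by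
    rw [two_smul, hΓ i hi i hi, if_pos rfl]
    split_ifs <;> simp
  exact smul_right_injective _ two_ne_zero htwice

lemma ChiralReality.map_conj (hreal : ChiralReality d Γ) (hi : i < d) :
    (Γ i).map (starRingEnd ℂ) = if i ≠ 0 ∧ Even i then -Γ i else Γ i := by
  obtain ⟨hzero, hodd, heven⟩ := hreal
  rcases Nat.eq_zero_or_pos i with rfl | hpos
  · simpa using hzero
  rcases Nat.even_or_odd i with hi' | hi'
  · simp [heven i hpos hi (Nat.even_iff.mp hi'), hi', hpos.ne']
  · simp [hodd i hpos hi (Nat.odd_iff.mp hi'), hi']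

lemma isAnticommutingPair_map_conj (hΓ : LorentzClifford d Γ) (hreal : ChiralReality d Γ) :
    IsAnticommutingPair (Set.Iio d) Γ (fun i => (Γ i).map (starRingEnd ℂ)) where
  anticomm a ha b hb hab := by
    rw [hreal.map_conj hb]
    split_ifs <;> simp [hΓ.anticomm ha hb hab]
  comm a ha := by
    rw [hreal.map_conj ha]
    split_ifs <;> simp

lemma mul_map_conj (hΓ : LorentzClifford d Γ) (hreal : ChiralReality d Γ) (hi : i < d) :
    Γ i * (Γ i).map (starRingEnd ℂ) = (-1) ^ i := by
  rw [hreal.map_conj hi]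
  rcases eq_or_ne i 0 with rfl | h0
  · simp [hΓ.mul_self_s15 hi]
  rcases Nat.even_or_odd i with hi' | hi' <;> simp [hΓ.mul_self_s15 hi, hi', h0, hi'.neg_one_pow]

lemma map_conj_prod_map (Γ : ℕ → Matrix α α ℂ) (l : List ℕ) :
    (l.map Γ).prod.map (starRingEnd ℂ) = (l.map fun i => (Γ i).map (starRingEnd ℂ)).prod := by
  have h := map_list_prod (starRingEnd ℂ).mapMatrix (l.map Γ)
  rwa [List.map_map] at h

end GammaMatrices

/-- For `d = 2k+2` and `1 ≤ j ≤ 2k+1`, set `M_R = Γ^0 ⋯ Γ̂^j ⋯ Γ^{2k+1}`.  For odd `k`,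
with `M_C = Γ^2 Γ^4 ⋯ Γ^{2k}` one has `M_R M_C conj(M_R) conj(M_C) = (-1)^{k(k-1)/2} I`;
for even `k`, with `M_C = Γ^0 Γ^1 Γ^3 ⋯ Γ^{2k+1}` one has
`M_R M_C conj(M_R) conj(M_C) = -(-1)^{k(k+1)/2} I` (computing `(CR_j)²` on a Dirac
fermion, independently of the phases `η_C`, `η_{R_j}`). -/
theorem CR_square {n k j : ℕ} (hj1 : 1 ≤ j) (hj2 : j ≤ 2 * k + 1)
    (Γ : ℕ → Matrix (Fin n) (Fin n) ℂ)
    (hΓ : LorentzClifford (2 * k + 2) Γ)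
    (hreal : ChiralReality (2 * k + 2) Γ)
    (MR MCodd MCeven : Matrix (Fin n) (Fin n) ℂ)
    (hMR : MR = (((List.range (2 * k + 2)).filter (fun i => i ≠ j)).map Γ).prod)
    (hMCodd : MCodd = (List.ofFn (fun a : Fin k => Γ (2 * ((a : ℕ) + 1)))).prod)
    (hMCeven : MCeven = Γ 0 * (List.ofFn (fun a : Fin (k + 1) => Γ (2 * (a : ℕ) + 1))).prod) :
    (Odd k → MR * MCodd * MR.map (starRingEnd ℂ) * MCodd.map (starRingEnd ℂ) =
      ((-1 : ℂ) ^ (k * (k - 1) / 2)) • 1) ∧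
    (Even k → MR * MCeven * MR.map (starRingEnd ℂ) * MCeven.map (starRingEnd ℂ) =
      (-((-1 : ℂ) ^ (k * (k + 1) / 2))) • 1) := by
  have h := CR_square_general hj1 hj2 (isAnticommutingPair_map_conj hΓ hreal)
    fun i hi => mul_map_conj hΓ hreal hi
  simp only [← map_conj_prod_map] at h
  simp only [prod_map_imaginaryIndices, prod_map_realIndices] at h
  simp only [← Algebra.algebraMap_eq_smul_one, map_neg, map_pow, map_one, hMR, hMCodd, hMCeven]
  exact ⟨fun _ => h.1, fun _ => h.2⟩
end

section
/- Let d = 2k+2 and let Γ^0, …, Γ^{2k+1} be complex n × n matrices satisfying the Lorentz Clifford relations and the chiral reality pattern, and let η_C, η_T be complex numbers. If k is odd, set M_T := η_T Γ^1 Γ^3 ⋯ Γ^{2k+1} and M_C := η_C Γ^2 Γ^4 ⋯ Γ^{2k}; then conj(M_T M_C) · conj(M_T) · conj(M_C) = (η_T^* η_C^*)^2 I. If k is even, set M_T := η_T Γ^0 Γ^2 ⋯ Γ^{2k} and M_C := η_C Γ^0 Γ^1 Γ^3 ⋯ Γ^{2k+1}; then conj(M_T M_C) · conj(M_T) · conj(M_C)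 = −(η_T^* η_C^*)^2 I. (These identities compute (CT)^2 on a Dirac fermion, showing its dependence on the phases η_C, η_T.) -/
/-!
Entrywise conjugation is a ring endomorphism, so `conj(T C) conj(T) conj(C) = conj((T C)²)`, and it
suffices to show that `(M_T M_C)²` is the scalar `(-1)^(k+1) (η_T η_C)²`.

Let `O = Γ^1 Γ^3 ⋯ Γ^{2k+1}` and `E = Γ^2 Γ^4 ⋯ Γ^{2k}`. Squaring a product of `N` pairwise
anticommuting factors costs the sign `(-1)^{N(N-1)/2}`, and each of the `2k+1` spatial matrices
squares to `-1`, so `(O E)² = (E O)² = (-1)^(k+1)`. In the second pattern, moving `Γ^0` through `E`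
gives `Γ^0 E Γ^0 = ± E`, and the sign disappears on squaring: `(Γ^0 E Γ^0 O)² = (E O)²`.
-/

open Matrix

section Anticommuting

variable {R : Type*} [Monoid R] [HasDistribNeg R]

lemma list_prod_mul_of_anticomm (a : R) (l : List R) (h : ∀ x ∈ l, x * a = -(a * x)) :
    l.prod * a = (-1) ^ l.length * (a * l.prod) := by
  induction l with
  | nil => simp
  | cons b l ih =>
    obtain ⟨hb, hl⟩ := List.forall_mem_cons.1 h
    calc (b :: l).prod * a = b * (l.prod * a) := by rw [List.prod_cons, mul_assoc]
      _ = (-1) ^ l.length * (b * a * l.prod) := by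
        rw [ih hl, ((Commute.neg_one_right b).pow_right _).left_comm, mul_assoc b]
      _ = (-1) ^ (b :: l).length * (a * (b :: l).prod) := by
        simp [hb, pow_succ, mul_assoc]

lemma list_prod_sq_of_pairwise_anticomm (l : List R)
    (h : l.Pairwise fun x y => y * x = -(x * y)) :
    l.prod ^ 2 = (-1) ^ l.length.choose 2 * (l.map (· ^ 2)).prod := by
  induction l with
  | nil => simp
  | cons a l ih =>
    obtain ⟨ha, hl⟩ := List.pairwise_cons.1 h
    have sign_comm (m : ℕ) : Commute a ((-1) ^ m) := (Commute.neg_one_right a).pow_right m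
    calc (a :: l).prod ^ 2 = a * (l.prod * a) * l.prod := by
          simp only [List.prod_cons, sq, mul_assoc]
      _ = (-1) ^ l.length * (a ^ 2 * l.prod ^ 2) := by
          rw [list_prod_mul_of_anticomm a l ha, (sign_comm _).left_comm]
          simp only [sq, mul_assoc]
      _ = (-1) ^ l.length * (-1) ^ l.length.choose 2 * (a ^ 2 * (l.map (· ^ 2)).prod) := by
          rw [ih hl, ((sign_comm _).pow_left 2).left_comm, mul_assoc]
      _ = (-1) ^ (a :: l).length.choose 2 * ((a :: l).map (· ^ 2)).prod := by
          rw [← pow_add, List.length_cons, Nat.choose_succ_succ', Nat.choose_one_right,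
            List.map_cons, List.prod_cons]

end Anticommuting

lemma neg_one_pow_two_mul_add_two_choose_two {R : Type*} [Monoid R] [HasDistribNeg R] (k : ℕ) :
    (-1 : R) ^ (2 * k + 2).choose 2 = (-1) ^ (k + 1) := by
  have hchoose : (2 * k + 2).choose 2 = 2 * (k * (k + 1)) + (k + 1) := by
    rw [Nat.choose_two_right]
    refine Nat.div_eq_of_eq_mul_left two_pos ?_
    rw [Nat.add_sub_assoc one_le_two]
    ring
  rw [hchoose, pow_add, (even_two_mul _).neg_one_pow, one_mul]

lemma map_smul_mul_smul_of_sq_eq_smul_one {α R S : Type*} [Fintype α] [DecidableEq α]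
    [CommSemiring R] [CommSemiring S] (φ : R →+* S) {A B : Matrix α α R} {c : R}
    (h : (A * B) ^ 2 = c • 1) (a b : R) :
    ((a • A) * (b • B)).map φ * (a • A).map φ * (b • B).map φ =
      (φ c * (φ a * φ b) ^ 2) • 1 := by
  have hsq : ((a • A) * (b • B)) ^ 2 = (c * (a * b) ^ 2) • 1 := by
    rw [smul_mul_smul_comm, smul_pow, h, smul_smul, mul_comm]
  calc ((a • A) * (b • B)).map φ * (a • A).map φ * (b • B).map φ
    _ = (((a • A) * (b • B)) ^ 2).map φ := by
      rw [mul_assoc, ← Matrix.map_mul, ← Matrix.map_mul, sq]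
    _ = (φ c * (φ a * φ b) ^ 2) • 1 := by
      rw [hsq, Matrix.map_smul' _ _ _ (map_mul φ), Matrix.map_one _ (map_zero φ) (map_one φ),
        map_mul, map_pow, map_mul]

/-- The indices `1, 3, …, 2k+1` of the odd spatial matrices in dimension `2k+2`, in increasing
order. -/
def oddIndices (k : ℕ) : List ℕ := List.ofFn fun a : Fin (k + 1) => 2 * (a : ℕ) + 1

/-- The indices `2, 4, …, 2k` of the even spatial matrices in dimension `2k+2`, in increasing
order; the time index `0` is left out. -/
def evenIndices (k : ℕ) : List ℕ := List.ofFn fun a : Fin k => 2 * ((a : ℕ) + 1)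

lemma length_oddIndices_append_evenIndices (k : ℕ) :
    (oddIndices k ++ evenIndices k).length = 2 * k + 1 := by
  simp only [oddIndices, evenIndices, List.length_append, List.length_ofFn]
  ring

lemma pos_and_lt_of_mem_oddIndices_append_evenIndices {k i : ℕ}
    (hi : i ∈ oddIndices k ++ evenIndices k) : 0 < i ∧ i < 2 * k + 2 := by
  rcases List.mem_append.1 hi with hi | hi <;> obtain ⟨a, rfl⟩ := List.mem_ofFn.1 hi <;> omega

lemma nodup_oddIndices_append_evenIndices (k : ℕ) : (oddIndices k ++ evenIndices k).Nodup := by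
  refine List.Nodup.append (List.nodup_ofFn.2 fun a b h => ?_)
    (List.nodup_ofFn.2 fun a b h => ?_) fun i hodd heven => ?_
  · exact Fin.ext (by simpa using h)
  · exact Fin.ext (by simpa using h)
  · obtain ⟨a, rfl⟩ := List.mem_ofFn.1 hodd
    obtain ⟨b, hb⟩ := List.mem_ofFn.1 heven
    omega

namespace LorentzClifford

variable {α : Type*} [Fintype α] [DecidableEq α] {d k : ℕ} {Γ : ℕ → Matrix α α ℂ}

lemma anticomm_s16 (hΓ : LorentzClifford d Γ) {i j : ℕ} (hi : i < d) (hj : j < d) (hij : i ≠ j) :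
    Γ j * Γ i = -(Γ i * Γ j) := by
  have h := hΓ j hj i hi
  rw [if_neg hij.symm] at h
  exact eq_neg_of_add_eq_zero_left h

lemma sq_time (hΓ : LorentzClifford d Γ) (hd : 0 < d) : Γ 0 ^ 2 = 1 := by
  have h := hΓ 0 hd 0 hd
  rw [if_pos rfl, if_pos rfl, ← two_smul ℂ, ← sq] at h
  exact smul_right_injective _ (two_ne_zero' ℂ) h

lemma sq_space (hΓ : LorentzClifford d Γ) {i : ℕ} (hi : i < d) (hpos : 0 < i) :
    Γ i ^ 2 = -1 := by
  have h := hΓ i hi i hi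
  rw [if_pos rfl, if_neg hpos.ne', ← two_smul ℂ, neg_smul, ← smul_neg, ← sq] at h
  exact smul_right_injective _ (two_ne_zero' ℂ) h

lemma sq_prod_space (hΓ : LorentzClifford d Γ) {l : List ℕ} (hnodup : l.Nodup)
    (hl : ∀ i ∈ l, 0 < i ∧ i < d) :
    (l.map Γ).prod ^ 2 = (-1) ^ (l.length + 1).choose 2 := by
  have hanti : (l.map Γ).Pairwise fun x y => y * x = -(x * y) :=
    List.pairwise_map.2 <| hnodup.imp_of_mem fun hi hj hij =>
      hΓ.anticomm_s16 (hl _ hi).2 (hl _ hj).2 hij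
  have hsq : ((l.map Γ).map (· ^ 2)).prod = (-1) ^ l.length := by
    refine (List.prod_eq_pow_card _ (-1) fun x hx => ?_).trans (by simp only [List.length_map])
    simp only [List.mem_map, exists_exists_and_eq_and] at hx
    obtain ⟨i, hi, rfl⟩ := hx
    exact hΓ.sq_space (hl i hi).2 (hl i hi).1
  rw [list_prod_sq_of_pairwise_anticomm _ hanti, hsq, List.length_map, ← pow_add,
    Nat.choose_succ_succ', Nat.choose_one_right, add_comm]

lemma sq_prod_of_perm (hΓ : LorentzClifford (2 * k + 2) Γ) {l : List ℕ}
    (hl : l.Perm (oddIndices k ++ evenIndices k)) : (l.map Γ).prod ^ 2 = (-1) ^ (k + 1) := by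
  rw [hΓ.sq_prod_space (hl.nodup_iff.2 (nodup_oddIndices_append_evenIndices k))
      fun i hi => pos_and_lt_of_mem_oddIndices_append_evenIndices (hl.subset hi),
    hl.length_eq, length_oddIndices_append_evenIndices, neg_one_pow_two_mul_add_two_choose_two]

lemma sq_prod_odd_mul_prod_even (hΓ : LorentzClifford (2 * k + 2) Γ) :
    (((oddIndices k).map Γ).prod * ((evenIndices k).map Γ).prod) ^ 2 = (-1) ^ (k + 1) := by
  simpa only [List.map_append, List.prod_append] using hΓ.sq_prod_of_perm (.refl _)

lemma sq_time_mul_prod_even_mul_time_mul_prod_odd (hΓ : LorentzClifford (2 * k + 2) Γ) :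
    (Γ 0 * ((evenIndices k).map Γ).prod * (Γ 0 * ((oddIndices k).map Γ).prod)) ^ 2 =
      (-1) ^ (k + 1) := by
  set E := ((evenIndices k).map Γ).prod
  set O := ((oddIndices k).map Γ).prod
  obtain ⟨m, hm⟩ : ∃ m : ℕ, E * Γ 0 = (-1) ^ m * (Γ 0 * E) := by
    refine ⟨_, list_prod_mul_of_anticomm (Γ 0) _ (List.forall_mem_map.2 fun i hi => ?_)⟩
    obtain ⟨hpos, hlt⟩ :=
      pos_and_lt_of_mem_oddIndices_append_evenIndices (List.mem_append_right _ hi)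
    exact hΓ.anticomm_s16 (Nat.succ_pos _) hlt hpos.ne
  have sign_comm (X : Matrix α α ℂ) : Commute X ((-1) ^ m) :=
    (Commute.neg_one_right X).pow_right m
  have hconj : Γ 0 * E * Γ 0 = (-1) ^ m * E := by
    rw [mul_assoc, hm, (sign_comm _).left_comm, ← mul_assoc (Γ 0), ← sq,
      hΓ.sq_time (Nat.succ_pos _), one_mul]
  have hEO : (E * O) ^ 2 = (-1) ^ (k + 1) := by
    simpa only [List.map_append, List.prod_append] using
      hΓ.sq_prod_of_perm List.perm_append_comm
  calc (Γ 0 * E * (Γ 0 * O)) ^ 2 = ((-1) ^ m * (E * O)) ^ 2 := by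
        rw [← mul_assoc, hconj, mul_assoc]
    _ = ((-1) ^ m) ^ 2 * (E * O) ^ 2 := (sign_comm _).symm.mul_pow 2
    _ = (-1) ^ (k + 1) := by rw [pow_right_comm, neg_one_sq, one_pow, one_mul, hEO]

end LorentzClifford

theorem CT_square_general {α : Type*} [Fintype α] [DecidableEq α] {k : ℕ}
    (Γ : ℕ → Matrix α α ℂ)
    (hΓ : LorentzClifford (2 * k + 2) Γ)
    (ηC ηT : ℂ)
    (MTodd MCodd MTeven MCeven : Matrix α α ℂ)
    (hMTodd : MTodd = ηT • (List.ofFn (fun a : Fin (k + 1) => Γ (2 * (a : ℕ) + 1))).prod)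
    (hMCodd : MCodd = ηC • (List.ofFn (fun a : Fin k => Γ (2 * ((a : ℕ) + 1)))).prod)
    (hMTeven : MTeven = ηT • (List.ofFn (fun a : Fin (k + 1) => Γ (2 * (a : ℕ)))).prod)
    (hMCeven : MCeven = ηC •
      (Γ 0 * (List.ofFn (fun a : Fin (k + 1) => Γ (2 * (a : ℕ) + 1))).prod)) :
    (MTodd * MCodd).map (starRingEnd ℂ) * MTodd.map (starRingEnd ℂ) *
        MCodd.map (starRingEnd ℂ) =
      ((-1) ^ (k + 1) * (starRingEnd ℂ ηT * starRingEnd ℂ ηC) ^ 2) • 1 ∧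
    (MTeven * MCeven).map (starRingEnd ℂ) * MTeven.map (starRingEnd ℂ) *
        MCeven.map (starRingEnd ℂ) =
      ((-1) ^ (k + 1) * (starRingEnd ℂ ηT * starRingEnd ℂ ηC) ^ 2) • 1 := by
  have hO : List.ofFn (fun a : Fin (k + 1) => Γ (2 * (a : ℕ) + 1)) = (oddIndices k).map Γ :=
    List.map_ofFn.symm
  have hE : List.ofFn (fun a : Fin k => Γ (2 * ((a : ℕ) + 1))) = (evenIndices k).map Γ :=
    List.map_ofFn.symm
  have hE₀ : List.ofFn (fun a : Fin (k + 1) => Γ (2 * (a : ℕ))) = Γ 0 :: (evenIndices k).map Γ :=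
    List.ofFn_succ.trans (congrArg _ hE)
  have sign_eq_smul : (-1 : Matrix α α ℂ) ^ (k + 1) = (-1 : ℂ) ^ (k + 1) • 1 := by
    rw [← neg_one_smul ℂ (1 : Matrix α α ℂ), smul_pow, one_pow]
  have sign_conj : starRingEnd ℂ ((-1) ^ (k + 1)) = (-1) ^ (k + 1) := by
    rw [map_pow, map_neg, map_one]
  rw [hMTodd, hMCodd, hMTeven, hMCeven, hO, hE, hE₀, List.prod_cons, ← sign_conj]
  exact ⟨map_smul_mul_smul_of_sq_eq_smul_one _
      (hΓ.sq_prod_odd_mul_prod_even.trans sign_eq_smul) _ _,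
    map_smul_mul_smul_of_sq_eq_smul_one _
      (hΓ.sq_time_mul_prod_even_mul_time_mul_prod_odd.trans sign_eq_smul) _ _⟩

/-- For `d = 2k+2`: if `k` is odd, with `M_T = η_T Γ^1 Γ^3 ⋯ Γ^{2k+1}` and
`M_C = η_C Γ^2 Γ^4 ⋯ Γ^{2k}`, one has
`conj(M_T M_C) conj(M_T) conj(M_C) = (η_T^* η_C^*)² I`; if `k` is even, with
`M_T = η_T Γ^0 Γ^2 ⋯ Γ^{2k}` and `M_C = η_C Γ^0 Γ^1 Γ^3 ⋯ Γ^{2k+1}`, one has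
`conj(M_T M_C) conj(M_T) conj(M_C) = -(η_T^* η_C^*)² I` (computing `(CT)²` on a Dirac
fermion, showing its dependence on the phases `η_C`, `η_T`). -/
theorem CT_square {n k : ℕ}
    (Γ : ℕ → Matrix (Fin n) (Fin n) ℂ)
    (hΓ : LorentzClifford (2 * k + 2) Γ)
    (hreal : ChiralReality (2 * k + 2) Γ)
    (ηC ηT : ℂ)
    (MTodd MCodd MTeven MCeven : Matrix (Fin n) (Fin n) ℂ)
    (hMTodd : MTodd = ηT • (List.ofFn (fun a : Fin (k + 1) => Γ (2 * (a : ℕ) + 1))).prod)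
    (hMCodd : MCodd = ηC • (List.ofFn (fun a : Fin k => Γ (2 * ((a : ℕ) + 1)))).prod)
    (hMTeven : MTeven = ηT • (List.ofFn (fun a : Fin (k + 1) => Γ (2 * (a : ℕ)))).prod)
    (hMCeven : MCeven = ηC •
      (Γ 0 * (List.ofFn (fun a : Fin (k + 1) => Γ (2 * (a : ℕ) + 1))).prod)) :
    (Odd k → (MTodd * MCodd).map (starRingEnd ℂ) * MTodd.map (starRingEnd ℂ) *
        MCodd.map (starRingEnd ℂ) =
      ((starRingEnd ℂ ηT * starRingEnd ℂ ηC) ^ 2) • 1) ∧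
    (Even k → (MTeven * MCeven).map (starRingEnd ℂ) * MTeven.map (starRingEnd ℂ) *
        MCeven.map (starRingEnd ℂ) =
      (-((starRingEnd ℂ ηT * starRingEnd ℂ ηC) ^ 2)) • 1) := by
  obtain ⟨hodd, heven⟩ :=
    CT_square_general Γ hΓ ηC ηT _ _ _ _ hMTodd hMCodd hMTeven hMCeven
  exact ⟨fun hk => by rw [hodd, hk.add_one.neg_one_pow, one_mul],
    fun hk => by rw [heven, hk.add_one.neg_one_pow, neg_one_mul]⟩
end
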